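/- There exists a constant C > 0 such that for every real ε with 0 < ε < 1 there is an n₀ such that for every natural number n ≥ n₀ the following holds with d = ⌈C · (ln n) / ε²⌉: there exist sets E_1, E_2, …, E_n ⊆ {1, …, n} such that (a) |E_i| ≤ (1 + ε) · d for every i; (b) every v ∈ {1, …, n} belongs to at least (1 − ε) · d of the sets E_i; and (c) for every real α ∈ [0, 2] and every index set I ⊆ {1, …, n} with |I| ≤ α · n / d, we have |⋃_{i ∈ I} E_i| ≤ (1 − exp(−α) + ε) · n. -/

import Mathlib

/-!
Put each `v` into each `E i` independently with probability `p = d / n`. The sizes of the sets, the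
degrees of the points and, for a fixed index set `I`, the number of points missed by
`⋃ i ∈ I, E i` are all sums of independent indicators, so a Chernoff bound controls their tails.
The expected number of missed points is `(1 - p) ^ #I * n ≥ (exp (-#I * p) - p) * n`, and it is
undershot by `ε * n / 2` with probability at most `exp (-ε ^ 2 * n / 16)`. There are only about
`n ^ (2 * n / d) = exp (O(ε ^ 2 * n / C))` relevant index sets, so for `C` large a union bound
over all failure events leaves a family with none of them.
-/

open MeasureTheory ProbabilityTheory Finset Filter Topology

lemma exp_sub_one_le_add_sq {x : ℝ} (hx : |x| ≤ 1) : Real.exp x - 1 ≤ x + x ^ 2 := by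
  linarith [(abs_le.1 (Real.abs_exp_sub_one_sub_id_le hx)).2]

lemma exp_neg_mul_sub_le_one_sub_pow {p : ℝ} (hp0 : 0 ≤ p) (hp1 : p ≤ 1) (m : ℕ) :
    Real.exp (-(m * p)) - p ≤ (1 - p) ^ m := by
  have exp_neg_mul_le : Real.exp (-p) * (1 - p ^ 2) ≤ 1 - p := by
    have : Real.exp (-p) * (p + 1) ≤ 1 := by
      grw [Real.add_one_le_exp p, ← Real.exp_add, neg_add_cancel, Real.exp_zero]
    nlinarith
  have mul_exp_neg_le_one : m * p * Real.exp (-(m * p)) ≤ 1 :=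
    (Real.mul_exp_neg_le_exp_neg_one _).trans (Real.exp_le_one_iff.2 (by norm_num))
  calc Real.exp (-(m * p)) - p
      ≤ Real.exp (-(m * p)) * (1 + m * -p ^ 2) := by
        linarith [mul_le_mul_of_nonneg_right mul_exp_neg_le_one hp0]
    _ ≤ Real.exp (-(m * p)) * (1 + -p ^ 2) ^ m := by
        gcongr
        exact one_add_mul_le_pow (by nlinarith) m
    _ = (Real.exp (-p) * (1 - p ^ 2)) ^ m := by
        rw [mul_pow, ← Real.exp_nat_mul, mul_neg, sub_eq_add_neg]
    _ ≤ (1 - p) ^ m := by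
        gcongr
        exact mul_nonneg (Real.exp_pos _).le (by nlinarith)

lemma mul_exp_neg_le_inv {x y : ℝ} (hx : 0 < x) (hy : 2 * Real.log x ≤ y) :
    x * Real.exp (-y) ≤ x⁻¹ := by
  calc x * Real.exp (-y) = Real.exp (Real.log x - y) := by
        rw [sub_eq_add_neg, Real.exp_add, Real.exp_log hx]
    _ ≤ Real.exp (-Real.log x) := Real.exp_le_exp.2 (by linarith)
    _ = x⁻¹ := by rw [Real.exp_neg, Real.exp_log hx]

section Chernoff

lemma natCast_card_filter_mem_eq_sum_indicator {Ω κ : Type*} [Fintype κ] (A : κ → Set Ω)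
    [∀ ω, DecidablePred fun k => ω ∈ A k] :
    (fun ω => (#{k | ω ∈ A k} : ℝ)) = ∑ k, (A k).indicator fun _ => (1 : ℝ) := by
  ext ω
  simp [Set.indicator_apply]

variable {Ω κ : Type*} [MeasurableSpace Ω] {μ : Measure Ω}

lemma mgf_indicator_one [IsProbabilityMeasure μ] {A : Set Ω} (hA : MeasurableSet A) (t : ℝ) :
    mgf (A.indicator fun _ => 1) μ t = 1 + μ.real A * (Real.exp t - 1) := by
  have exp_indicator (ω : Ω) : Real.exp (t * A.indicator (fun _ => 1) ω) =
      1 + A.indicator (fun _ => Real.exp t - 1) ω := by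
    by_cases hω : ω ∈ A <;> simp [hω]
  simp_rw [mgf, exp_indicator]
  rw [integral_add (integrable_const 1) ((integrable_const _).indicator hA)]
  simp [integral_indicator_const _ hA]

variable [Fintype κ] {A : κ → Set Ω} [∀ ω, DecidablePred fun k => ω ∈ A k]

lemma integrable_exp_mul_card_filter_mem [IsFiniteMeasure μ]
    (hA : ∀ k, MeasurableSet (A k)) (t : ℝ) :
    Integrable (fun ω => Real.exp (t * #{k | ω ∈ A k})) μ := by
  have measurable_count : Measurable fun ω => (#{k | ω ∈ A k} : ℝ) := by
    rw [natCast_card_filter_mem_eq_sum_indicator]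
    simpa only [Finset.sum_fn] using
      Finset.measurable_sum univ fun k _ => measurable_const.indicator (hA k)
  have count_mem_Icc (ω : Ω) : (#{k | ω ∈ A k} : ℝ) ∈ Set.Icc (0 : ℝ) (Fintype.card κ : ℝ) :=
    ⟨by positivity, mod_cast card_le_univ _⟩
  exact integrable_exp_mul_of_mem_Icc measurable_count.aemeasurable (ae_of_all _ count_mem_Icc)

variable [IsProbabilityMeasure μ]

lemma mgf_card_filter_mem_le (hA : ∀ k, MeasurableSet (A k)) (hindep : iIndepSet A μ)
    {t : ℝ} (ht : |t| ≤ 1) :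
    mgf (fun ω => (#{k | ω ∈ A k} : ℝ)) μ t ≤
      Real.exp ((∑ k, μ.real (A k)) * (t + t ^ 2)) := by
  rw [natCast_card_filter_mem_eq_sum_indicator, hindep.iIndepFun_indicator.mgf_sum
    (fun k => measurable_const.indicator (hA k)), Finset.sum_mul, Real.exp_sum]
  refine prod_le_prod (fun k _ => mgf_nonneg) fun k _ => ?_
  calc mgf ((A k).indicator fun _ => 1) μ t
      = μ.real (A k) * (Real.exp t - 1) + 1 := by rw [mgf_indicator_one (hA k), add_comm]
    _ ≤ μ.real (A k) * (t + t ^ 2) + 1 := by gcongr; exact exp_sub_one_le_add_sq ht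
    _ ≤ Real.exp (μ.real (A k) * (t + t ^ 2)) := Real.add_one_le_exp _

lemma measureReal_add_le_card_filter_mem_le (hA : ∀ k, MeasurableSet (A k))
    (hindep : iIndepSet A μ) {M δ : ℝ} (hM : ∑ k, μ.real (A k) ≤ M) (hδ0 : 0 ≤ δ) (hδ2 : δ ≤ 2) :
    μ.real {ω | ∑ k, μ.real (A k) + δ * M ≤ #{k | ω ∈ A k}} ≤ Real.exp (-(M * δ ^ 2 / 4)) := by
  refine (measure_ge_le_exp_mul_mgf _ (by linarith : 0 ≤ δ / 2)
    (integrable_exp_mul_card_filter_mem hA (δ / 2))).trans ?_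
  grw [mgf_card_filter_mem_le hA hindep (abs_le.2 ⟨by linarith, by linarith⟩), ← Real.exp_add]
  rw [Real.exp_le_exp]
  linarith [mul_le_mul_of_nonneg_right hM (sq_nonneg (δ / 2))]

lemma measureReal_card_filter_mem_le_sub_le (hA : ∀ k, MeasurableSet (A k))
    (hindep : iIndepSet A μ) {M δ : ℝ} (hM : ∑ k, μ.real (A k) ≤ M) (hδ0 : 0 ≤ δ) (hδ2 : δ ≤ 2) :
    μ.real {ω | (#{k | ω ∈ A k} : ℝ) ≤ ∑ k, μ.real (A k) - δ * M} ≤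
      Real.exp (-(M * δ ^ 2 / 4)) := by
  refine (measure_le_le_exp_mul_mgf _ (by linarith : -(δ / 2) ≤ 0)
    (integrable_exp_mul_card_filter_mem hA (-(δ / 2)))).trans ?_
  grw [mgf_card_filter_mem_le hA hindep (abs_le.2 ⟨by linarith, by linarith⟩), ← Real.exp_add]
  rw [Real.exp_le_exp]
  linarith [mul_le_mul_of_nonneg_right hM (sq_nonneg (δ / 2))]

end Chernoff

lemma exists_forall_notMem_of_sum_measureReal_lt_one {Ω κ : Type*} [MeasurableSpace Ω]
    [Fintype κ] {μ : Measure Ω} [IsProbabilityMeasure μ] {B : κ → Set Ω}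
    (hB : ∑ k, μ.real (B k) < 1) : ∃ ω, ∀ k, ω ∉ B k := by
  by_contra! hcover
  have cover : ⋃ k, B k = Set.univ := Set.eq_univ_of_forall fun ω => Set.mem_iUnion.2 (hcover ω)
  exact (measureReal_iUnion_fintype_le (μ := μ) B).not_gt (by simpa [cover] using hB)

section Independence

variable {Ω : Type*} [MeasurableSpace Ω] {μ : Measure Ω}

lemma iIndepSet_pi_eval_preimage {κ : Type*} [Fintype κ] {α : κ → Type*}
    [∀ k, MeasurableSpace (α k)] (ν : ∀ k, Measure (α k)) [∀ k, IsProbabilityMeasure (ν k)]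
    {S : ∀ k, Set (α k)} (hS : ∀ k, MeasurableSet (S k)) :
    iIndepSet (fun k => Function.eval k ⁻¹' S k) (Measure.pi ν) := by
  rw [iIndepSet_iff_meas_biInter fun k => measurable_pi_apply k (hS k)]
  exact fun s => (iIndepFun_pi (X := fun k => (id : α k → α k)) fun _ => aemeasurable_id)
    |>.measure_inter_preimage_eq_mul s fun k _ => hS k

lemma measure_biInter_row {V ι : Type*} {A : V × ι → Set Ω} (hindep : iIndepSet A μ)
    (v : V) (I : Finset ι) : μ (⋂ i ∈ I, A (v, i)) = ∏ i ∈ I, μ (A (v, i)) :=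
  (hindep.precomp (Prod.mk_right_injective v)).meas_biInter I

lemma iIndepSet_biInter_row {V ι : Type*} {A : V × ι → Set Ω}
    (hA : ∀ x, MeasurableSet (A x)) (hindep : iIndepSet A μ) (I : Finset ι) :
    iIndepSet (fun v => ⋂ i ∈ I, A (v, i)) μ := by
  rw [iIndepSet_iff_meas_biInter fun v => I.measurableSet_biInter fun i _ => hA (v, i)]
  intro S
  simp_rw [measure_biInter_row hindep]
  rw [← prod_product (f := fun x => μ (A x)), ← hindep.meas_biInter]
  congr 1
  ext ω
  simp only [Set.mem_iInter, mem_product, Prod.forall]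
  grind

end Independence

section RandomFamily

variable {V ι : Type*} [Fintype V] [Fintype ι]

variable (V ι) in
/-- The law of a random `V × ι` incidence matrix whose entries are independently `true` with
probability `p`. Column `i` encodes the random set `{v | ω (v, i) = true}`. -/
noncomputable def incidenceMeasure (p : unitInterval) : Measure (V × ι → Bool) :=
  Measure.pi fun _ => bernoulliMeasure true false p

variable (p : unitInterval)

instance incidenceMeasure.instIsProbabilityMeasure :
    IsProbabilityMeasure (incidenceMeasure V ι p) :=
  inferInstanceAs (IsProbabilityMeasure (Measure.pi _))

lemma iIndepSet_incidenceMeasure_entry (b : Bool) :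
    iIndepSet (fun x => {ω | ω x = b}) (incidenceMeasure V ι p) :=
  iIndepSet_pi_eval_preimage _ fun _ => measurableSet_singleton b

lemma incidenceMeasure_entry (x : V × ι) (b : Bool) :
    incidenceMeasure V ι p {ω | ω x = b} = bernoulliMeasure true false p {b} :=
  (measurePreserving_eval (fun _ : V × ι => bernoulliMeasure true false p) x).measure_preimage
    (measurableSet_singleton b).nullMeasurableSet

lemma incidenceMeasure_real_entry_true (x : V × ι) :
    (incidenceMeasure V ι p).real {ω | ω x = true} = p := by
  simp [measureReal_def, incidenceMeasure_entry]

lemma incidenceMeasure_real_row_false (v : V) (I : Finset ι) :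
    (incidenceMeasure V ι p).real {ω | ∀ i ∈ I, ω (v, i) = false} = (1 - p : ℝ) ^ #I := by
  have h := measure_biInter_row (iIndepSet_incidenceMeasure_entry p false) v I
  simp_rw [incidenceMeasure_entry, ← Set.ofPred_forall] at h
  simp [measureReal_def, h]

lemma iIndepSet_incidenceMeasure_row_false (I : Finset ι) :
    iIndepSet (fun v => {ω | ∀ i ∈ I, ω (v, i) = false}) (incidenceMeasure V ι p) := by
  have h := iIndepSet_biInter_row (fun _ => .of_discrete)
    (iIndepSet_incidenceMeasure_entry (V := V) (ι := ι) p false) I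
  simpa only [← Set.ofPred_forall] using h

lemma incidenceMeasure_real_column_large_le {ε : ℝ} (hε0 : 0 ≤ ε) (hε2 : ε ≤ 2) (i : ι) :
    (incidenceMeasure V ι p).real
        {ω | (1 + ε) * (p * Fintype.card V) ≤ #{v | ω (v, i) = true}} ≤
      Real.exp (-(p * Fintype.card V * ε ^ 2 / 4)) := by
  have expected_card : ∑ v, (incidenceMeasure V ι p).real {ω | ω (v, i) = true} =
      p * Fintype.card V := by
    simp [incidenceMeasure_real_entry_true, mul_comm]
  have tail := measureReal_add_le_card_filter_mem_le
    (A := fun v => {ω : V × ι → Bool | ω (v, i) = true}) (fun _ => .of_discrete)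
    ((iIndepSet_incidenceMeasure_entry p true).precomp (Prod.mk_left_injective i))
    expected_card.le hε0 hε2
  simpa only [Set.mem_ofPred_eq, expected_card, one_add_mul] using tail

lemma incidenceMeasure_real_row_small_le {ε : ℝ} (hε0 : 0 ≤ ε) (hε2 : ε ≤ 2) (v : V) :
    (incidenceMeasure V ι p).real
        {ω | (#{i | ω (v, i) = true} : ℝ) ≤ (1 - ε) * (p * Fintype.card ι)} ≤
      Real.exp (-(p * Fintype.card ι * ε ^ 2 / 4)) := by
  have expected_card : ∑ i, (incidenceMeasure V ι p).real {ω | ω (v, i) = true} =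
      p * Fintype.card ι := by
    simp [incidenceMeasure_real_entry_true, mul_comm]
  have tail := measureReal_card_filter_mem_le_sub_le
    (A := fun i => {ω : V × ι → Bool | ω (v, i) = true}) (fun _ => .of_discrete)
    ((iIndepSet_incidenceMeasure_entry p true).precomp (Prod.mk_right_injective v))
    expected_card.le hε0 hε2
  simpa only [Set.mem_ofPred_eq, expected_card, one_sub_mul] using tail

lemma incidenceMeasure_real_uncovered_small_le {ε : ℝ} (hp : p ≤ ε / 2) (hε2 : ε ≤ 2)
    (I : Finset ι) :
    (incidenceMeasure V ι p).real {ω | (#{v | ∀ i ∈ I, ω (v, i) = false} : ℝ) ≤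
        (Real.exp (-(#I * p)) - ε) * Fintype.card V} ≤
      Real.exp (-(Fintype.card V * ε ^ 2 / 16)) := by
  have hε0 : 0 ≤ ε := by linarith [p.2.1]
  have expected_card : ∑ v, (incidenceMeasure V ι p).real {ω | ∀ i ∈ I, ω (v, i) = false} =
      (1 - p : ℝ) ^ #I * Fintype.card V := by
    simp [incidenceMeasure_real_row_false, mul_comm]
  have expected_card_le : (1 - p : ℝ) ^ #I * Fintype.card V ≤ Fintype.card V :=
    mul_le_of_le_one_left (by positivity) (pow_le_one₀ (by linarith [p.2.2]) (by linarith [p.2.1]))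
  have tail := measureReal_card_filter_mem_le_sub_le (fun _ => .of_discrete)
    (iIndepSet_incidenceMeasure_row_false p I) (expected_card.trans_le expected_card_le)
    (δ := ε / 2) (by linarith) (by linarith)
  calc _ ≤ (incidenceMeasure V ι p).real {ω | (#{v | ∀ i ∈ I, ω (v, i) = false} : ℝ) ≤
        (1 - p : ℝ) ^ #I * Fintype.card V - ε / 2 * Fintype.card V} := by
        refine measureReal_mono (Set.ofPred_subset_ofPred.2 fun ω hω => hω.trans ?_)
        rw [← sub_mul]
        refine mul_le_mul_of_nonneg_right ?_ (Nat.cast_nonneg _)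
        linarith [exp_neg_mul_sub_le_one_sub_pow p.2.1 p.2.2 #I]
    _ ≤ Real.exp (-(Fintype.card V * (ε / 2) ^ 2 / 4)) := by
        simpa only [Set.mem_ofPred_eq, expected_card] using tail
    _ = Real.exp (-(Fintype.card V * ε ^ 2 / 16)) := by ring_nf

theorem exists_family_of_failure_lt_one [DecidableEq V] {ε : ℝ} (hp : p ≤ ε / 2) (hε2 : ε ≤ 2)
    (𝓘 : Finset (Finset ι))
    (hfail : Fintype.card ι * Real.exp (-(p * Fintype.card V * ε ^ 2 / 4)) +
      Fintype.card V * Real.exp (-(p * Fintype.card ι * ε ^ 2 / 4)) +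
      #𝓘 * Real.exp (-(Fintype.card V * ε ^ 2 / 16)) < 1) :
    ∃ E : ι → Finset V,
      (∀ i, (#(E i) : ℝ) ≤ (1 + ε) * (p * Fintype.card V)) ∧
      (∀ v, (1 - ε) * (p * Fintype.card ι) ≤ #{i | v ∈ E i}) ∧
      ∀ I ∈ 𝓘, (#(I.biUnion E) : ℝ) ≤ (1 - Real.exp (-(#I * p)) + ε) * Fintype.card V := by
  have hε0 : 0 ≤ ε := by linarith [p.2.1]
  let bad : ι ⊕ V ⊕ 𝓘 → Set (V × ι → Bool) := Sum.elim
    (fun i => {ω | (1 + ε) * (p * Fintype.card V) ≤ #{v | ω (v, i) = true}}) <| Sum.elim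
    (fun v => {ω | (#{i | ω (v, i) = true} : ℝ) ≤ (1 - ε) * (p * Fintype.card ι)})
    (fun I => {ω | (#{v | ∀ i ∈ I.1, ω (v, i) = false} : ℝ) ≤
      (Real.exp (-(#I.1 * p)) - ε) * Fintype.card V})
  have union_bound : ∑ k, (incidenceMeasure V ι p).real (bad k) < 1 := by
    refine lt_of_le_of_lt ?_ hfail
    rw [Fintype.sum_sum_type, Fintype.sum_sum_type, ← add_assoc, ← nsmul_eq_mul, ← nsmul_eq_mul,
      ← nsmul_eq_mul, ← Fintype.card_coe 𝓘]
    gcongr <;> refine sum_le_card_nsmul _ _ _ fun k _ => ?_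
    · exact incidenceMeasure_real_column_large_le p hε0 hε2 k
    · exact incidenceMeasure_real_row_small_le p hε0 hε2 k
    · exact incidenceMeasure_real_uncovered_small_le p hp hε2 k.1
  obtain ⟨ω, hω⟩ := exists_forall_notMem_of_sum_measureReal_lt_one union_bound
  refine ⟨fun i => {v | ω (v, i) = true}, fun i => ?_, fun v => ?_, fun I hI => ?_⟩
  · exact (not_le.1 (hω (.inl i))).le
  · simpa using (not_le.1 (hω (.inr (.inl v)))).le
  · have uncovered : (Real.exp (-(#I * p)) - ε) * Fintype.card V ≤
        (#{v | ∀ i ∈ I, ω (v, i) = false} : ℝ) := (not_le.1 (hω (.inr (.inr ⟨I, hI⟩)))).le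
    have biUnion_eq : (I.biUnion fun i => {v | ω (v, i) = true}) =
        ({v | ∀ i ∈ I, ω (v, i) = false} : Finset V)ᶜ := by
      ext v; simp
    rw [biUnion_eq, card_compl, Nat.cast_sub (card_le_univ _)]
    linarith

end RandomFamily

lemma card_filter_card_le_le (α : Type*) [Fintype α] [Nonempty α] (M : ℝ) :
    (#{I : Finset α | (#I : ℝ) ≤ M} : ℝ) ≤ Real.exp 1 * (Fintype.card α : ℝ) ^ M := by
  set n := Fintype.card α
  have n_pos : 0 < (n : ℝ) := mod_cast Fintype.card_pos
  have one_le (I : Finset α) (hI : (#I : ℝ) ≤ M) : 1 ≤ (n : ℝ) ^ M * (n : ℝ)⁻¹ ^ #I := by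
    rw [inv_pow, ← Real.rpow_natCast, ← Real.rpow_neg n_pos.le, ← Real.rpow_add n_pos]
    exact Real.one_le_rpow (mod_cast Fintype.card_pos) (by linarith)
  have sum_inv_pow_card : ∑ I : Finset α, (n : ℝ)⁻¹ ^ #I = (1 + (n : ℝ)⁻¹) ^ n := by
    simpa [add_comm] using Fintype.sum_pow_mul_eq_add_pow α (n : ℝ)⁻¹ 1
  calc (#{I : Finset α | (#I : ℝ) ≤ M} : ℝ)
      = ∑ I : Finset α with (#I : ℝ) ≤ M, (1 : ℝ) := by simp
    _ ≤ ∑ I : Finset α with (#I : ℝ) ≤ M, (n : ℝ) ^ M * (n : ℝ)⁻¹ ^ #I :=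
        sum_le_sum fun I hI => one_le I (mem_filter.1 hI).2
    _ ≤ ∑ I : Finset α, (n : ℝ) ^ M * (n : ℝ)⁻¹ ^ #I :=
        sum_le_univ_sum_of_nonneg fun I => by positivity
    _ = (n : ℝ) ^ M * (1 + (n : ℝ)⁻¹) ^ n := by rw [← mul_sum, sum_inv_pow_card]
    _ ≤ Real.exp 1 * (n : ℝ) ^ M := by
        rw [mul_comm]
        gcongr
        exact Real.one_add_inv_pow_le_exp

lemma tendsto_natCeil_mul_log_div_atTop {c : ℝ} (hc : 0 ≤ c) :
    Tendsto (fun n : ℕ => (⌈c * Real.log n⌉₊ : ℝ) / n) atTop (𝓝 0) := by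
  have log_div : Tendsto (fun n : ℕ => Real.log n / n) atTop (𝓝 0) :=
    Real.isLittleO_log_id_atTop.tendsto_div_nhds_zero.comp tendsto_natCast_atTop_atTop
  have upper : Tendsto (fun n : ℕ => c * (Real.log n / n) + (n : ℝ)⁻¹) atTop (𝓝 0) := by
    simpa using (log_div.const_mul c).add tendsto_inv_atTop_nhds_zero_nat
  refine squeeze_zero (fun n => by positivity) (fun n => ?_) upper
  calc (⌈c * Real.log n⌉₊ : ℝ) / n ≤ (c * Real.log n + 1) / n := by
        gcongr
        exact (Nat.ceil_lt_add_one (mul_nonneg hc (Real.log_natCast_nonneg n))).le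
    _ = c * (Real.log n / n) + (n : ℝ)⁻¹ := by ring

lemma tendsto_two_mul_inv_add_exp_atTop {c : ℝ} (hc : 0 < c) :
    Tendsto (fun n : ℕ => 2 * (n : ℝ)⁻¹ + Real.exp (1 - n * c)) atTop (𝓝 0) := by
  have exponent : Tendsto (fun n : ℕ => 1 - n * c) atTop atBot :=
    tendsto_const_nhds.add_atBot (tendsto_neg_atTop_atBot.comp
      (tendsto_natCast_atTop_atTop.atTop_mul_const hc))
  simpa using (tendsto_inv_atTop_nhds_zero_nat.const_mul (2 : ℝ)).add
    (Real.tendsto_exp_atBot.comp exponent)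

lemma card_filter_mul_exp_neg_le {n d : ℕ} {A ε : ℝ} (hn : 0 < n) (hd : 0 < d)
    (hA : 32 * A * Real.log n ≤ d * ε ^ 2) :
    (#{I : Finset (Fin n) | (#I : ℝ) ≤ A * n / d} : ℝ) * Real.exp (-(n * ε ^ 2 / 16)) ≤
      Real.exp (1 - n * (ε ^ 2 / 32)) := by
  have : NeZero n := ⟨hn.ne'⟩
  have log_count_le : Real.log n * (A * n / d) ≤ n * (ε ^ 2 / 32) := by
    rw [← mul_div_assoc, div_le_iff₀ (by positivity)]
    linarith [mul_le_mul_of_nonneg_left hA n.cast_nonneg]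
  calc (#{I : Finset (Fin n) | (#I : ℝ) ≤ A * n / d} : ℝ) * Real.exp (-(n * ε ^ 2 / 16))
      ≤ Real.exp 1 * (n : ℝ) ^ (A * n / d) * Real.exp (-(n * ε ^ 2 / 16)) := by
        gcongr
        simpa using card_filter_card_le_le (Fin n) (A * n / d)
    _ = Real.exp (1 + Real.log n * (A * n / d) - n * ε ^ 2 / 16) := by
        rw [Real.rpow_def_of_pos (by positivity), ← Real.exp_add, ← Real.exp_add, sub_eq_add_neg]
    _ ≤ Real.exp (1 - n * (ε ^ 2 / 32)) := Real.exp_le_exp.2 (by linarith)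

theorem exists_family_of_log_le {n d : ℕ} {A ε : ℝ} (hn : 1 < n) (hε2 : ε ≤ 2)
    (hdn : (d : ℝ) / n ≤ ε / 2) (hlog : 8 * Real.log n ≤ d * ε ^ 2)
    (hA : 32 * A * Real.log n ≤ d * ε ^ 2)
    (hfail : 2 * (n : ℝ)⁻¹ + Real.exp (1 - n * (ε ^ 2 / 32)) < 1) :
    ∃ E : Fin n → Finset (Fin n),
      (∀ i, (#(E i) : ℝ) ≤ (1 + ε) * d) ∧
      (∀ v, (1 - ε) * d ≤ #{i | v ∈ E i}) ∧
      ∀ α ≤ A, ∀ I : Finset (Fin n), (#I : ℝ) ≤ α * n / d →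
        (#(I.biUnion E) : ℝ) ≤ (1 - Real.exp (-α) + ε) * n := by
  have n_pos : 0 < (n : ℝ) := by positivity
  have d_pos : 0 < (d : ℝ) := by
    by_contra! hd
    nlinarith [Real.log_pos (Nat.one_lt_cast.2 hn), sq_nonneg ε]
  have p_mem : (d : ℝ) / n ∈ unitInterval := ⟨by positivity, by linarith⟩
  have pn_eq : (d : ℝ) / n * n = d := div_mul_cancel₀ _ n_pos.ne'
  have degree_failure : n * Real.exp (-(d * ε ^ 2 / 4)) ≤ (n : ℝ)⁻¹ :=
    mul_exp_neg_le_inv n_pos (by linarith)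
  have cover_failure := card_filter_mul_exp_neg_le (by lia) (Nat.cast_pos.1 d_pos) hA
  obtain ⟨E, hsize, hdegree, hcover⟩ := exists_family_of_failure_lt_one (V := Fin n) (ι := Fin n)
    ⟨(d : ℝ) / n, p_mem⟩ hdn hε2 {I | (#I : ℝ) ≤ A * n / d} (by
      simp only [Fintype.card_fin, pn_eq]
      linarith)
  simp only [Fintype.card_fin, pn_eq] at hsize hdegree hcover
  refine ⟨E, hsize, hdegree, fun α hα I hI => (hcover I ?_).trans ?_⟩
  · simpa using hI.trans (by gcongr)
  · have : #I * ((d : ℝ) / n) ≤ α := by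
      rwa [le_div_iff₀ d_pos, ← div_le_iff₀ n_pos, mul_div_assoc] at hI
    gcongr

theorem setCover_gap_instance_general (A : ℝ) : ∃ C : ℝ, 0 < C ∧
    ∀ ε : ℝ, 0 < ε → ε ≤ 2 → ∃ n₀ : ℕ, ∀ n : ℕ, n₀ ≤ n →
      ∀ d : ℕ, d = ⌈C * Real.log n / ε ^ 2⌉₊ →
        ∃ E : Fin n → Finset (Fin n),
          (∀ i, (#(E i) : ℝ) ≤ (1 + ε) * d) ∧
          (∀ v, (1 - ε) * d ≤ #{i | v ∈ E i}) ∧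
          ∀ α ≤ A, ∀ I : Finset (Fin n), (#I : ℝ) ≤ α * n / d →
            (#(I.biUnion E) : ℝ) ≤ (1 - Real.exp (-α) + ε) * n := by
  refine ⟨32 * max A 1, by positivity, fun ε hε0 hε2 => ?_⟩
  have density := tendsto_natCeil_mul_log_div_atTop (c := 32 * max A 1 / ε ^ 2) (by positivity)
  have failure := tendsto_two_mul_inv_add_exp_atTop (c := ε ^ 2 / 32) (by positivity)
  obtain ⟨n₀, hn₀⟩ := eventually_atTop.1 <| (eventually_gt_atTop 1).and <|
    (density.eventually_le_const (half_pos hε0)).and (failure.eventually_lt_const one_pos)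
  refine ⟨n₀, fun n hn d hd => ?_⟩
  obtain ⟨hn1, hdn, hfail⟩ := hn₀ n hn
  rw [← mul_div_right_comm, ← hd] at hdn
  have log_le : 32 * max A 1 * Real.log n ≤ d * ε ^ 2 := by
    rw [← div_le_iff₀ (by positivity), hd]
    exact Nat.le_ceil _
  have : 0 ≤ Real.log n := Real.log_natCast_nonneg n
  refine exists_family_of_log_le hn1 hε2 hdn ?_ ?_ hfail <;> refine le_trans ?_ log_le <;> gcongr
  · linarith [le_max_right A 1]
  · exact le_max_left A 1

/-- there is a constant `C > 0` such that for every `0 < ε < 1` and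
every large enough `n`, with `d = ⌈C ln n / ε²⌉`, there exist sets
`E₁, …, Eₙ ⊆ [n]` with (a) `|Eᵢ| ≤ (1 + ε) d` for all `i`; (b) every `v ∈ [n]`
belongs to at least `(1 − ε) d` of the `Eᵢ`; (c) for all `α ∈ [0, 2]` and all
`I ⊆ [n]` with `|I| ≤ α n / d`, `|⋃_{i ∈ I} Eᵢ| ≤ (1 − e^{−α} + ε) n`. -/
theorem setCover_gap_instance : ∃ C : ℝ, 0 < C ∧
    ∀ ε : ℝ, 0 < ε → ε < 1 → ∃ n₀ : ℕ, ∀ n : ℕ, n₀ ≤ n →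
      ∀ d : ℕ, d = ⌈C * Real.log n / ε ^ 2⌉₊ →
        ∃ Esets : Fin n → Finset (Fin n),
          (∀ i : Fin n, ((Esets i).card : ℝ) ≤ (1 + ε) * d) ∧
          (∀ v : Fin n,
            ((1 - ε) * d : ℝ) ≤ ((Finset.univ.filter fun i : Fin n => v ∈ Esets i).card : ℝ)) ∧
          (∀ α : ℝ, 0 ≤ α → α ≤ 2 → ∀ I : Finset (Fin n), (I.card : ℝ) ≤ α * n / d →
            (((I.biUnion Esets).card : ℝ) ≤ (1 - Real.exp (-α) + ε) * n)) := by
  obtain ⟨C, hC, hgap⟩ := setCover_gap_instance_general 2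
  exact ⟨C, hC, fun ε hε0 hε1 => (hgap ε hε0 (by linarith)).imp fun _ h n hn d hd =>
    (h n hn d hd).imp fun _ ⟨hsize, hdegree, hcover⟩ => ⟨hsize, hdegree, fun α _ => hcover α⟩⟩
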